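/- Fix a real β ≥ 0 and integers n > m ≥ 0, and consider G(z,w) := Z^{(β)}_{n,m}(w,z), i.e. the 2D Laguerre polynomial with first index n applied with the variables interchanged. Then for all z, w ∈ ℂ (with w ≠ 0 where division by w occurs): (i) (β/w)·G(z,w) + ∂_w G(z,w) = (n+β)·Z^{(β)}_{n−1,m}(w,z); (ii) w·G(z,w) − ∂_z G(z,w) = Z^{(β)}_{n+1,m}(w,z); (iii) if m ≥ 1, −∂_z G(z,w) = Z^{(β)}_{n,m−1}(w,z); (iv) if n ≥ m+2 or n = m+1 with the raised index still not exceeding n, more precisely whenever n ≥ m+1, (β/w)·G(z,w) + ∂_w G(z,w) − z·G(z,w) = (m+1)·Z^{(β)}_{n,m+1}(w,z). (Ladder operators 𝒜₁, 𝒜₁†, 𝒜₂, 𝒜₂† for the case n > m.) -/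

import Mathlib

open Finset

/-- Pochhammer symbol `(a)_j = a (a+1) ⋯ (a+j-1)`. -/
noncomputable def poch (a : ℝ) (j : ℕ) : ℝ := ∏ i ∈ Finset.range j, (a + i)

/-- The generalized 2D Laguerre polynomial `Z^{(β)}_{m,n}(z,w)` (for `m ≥ n`). -/
noncomputable def Zc (β : ℝ) (m n : ℕ) (z w : ℂ) : ℂ :=
  ∑ k ∈ Finset.range (n + 1),
    (((-1 : ℝ) ^ (n - k) * poch (β + 1) m /
        (k.factorial * (n - k).factorial * poch (β + 1) (m - k)) : ℝ) : ℂ) *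
      z ^ (m - k) * w ^ (n - k)

/-!
For `m = n + d` the polynomial factors through the classical Laguerre polynomials:
`Z^{(β)}_{m,n}(z,w) = z ^ d * L_n^{(β+d)}(z w)`. Up to powers of `z`, the operators
`β/z + ∂_z` and `∂_w` become `α + x d/dx` and `d/dx` acting on `L_n^{(α)}(x)`, so each ladder
relation is a contiguity relation of Laguerre polynomials, and these come down to Pascal's rule and
the absorption identity for binomial coefficients.
-/

section Laguerre

open Polynomial

section BinomialRing

variable {R : Type*} [CommRing R] [BinomialRing R]

theorem succ_mul_ringChoose_succ (r : R) (k : ℕ) :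
    ((k : R) + 1) * Ring.choose (r + 1) (k + 1) = (r + 1) * Ring.choose r k := by
  simpa using Ring.choose_add_smul_choose r k 1

theorem add_one_sub_mul_ringChoose (r : R) (k : ℕ) :
    (r + 1 - k) * Ring.choose (r + 1) k = (r + 1) * Ring.choose r k := by
  cases k with
  | zero => simp
  | succ k =>
    push_cast
    linear_combination (r + 1) * Ring.choose_succ_succ r k - succ_mul_ringChoose_succ r k

end BinomialRing

variable {K : Type*} [Field K] [CharZero K]

/-- The generalized Laguerre polynomial
`L_n^{(α)}(x) = ∑_{j ≤ n} (-1)^j binom(n + α, n - j) x^j / j!`, for an arbitrary parameter `α`.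
The sum runs over the pairs `(n - j, j)`, which avoids truncated subtraction. -/
noncomputable def laguerre (α : K) (n : ℕ) : K[X] :=
  ∑ p ∈ antidiagonal n, monomial p.2 ((-1) ^ p.2 * Ring.choose (α + n) p.1 / p.2.factorial)

theorem laguerre_zero (α : K) : laguerre α 0 = 1 := by
  simp [laguerre]

theorem laguerre_add_one_succ (α : K) (n : ℕ) :
    laguerre (α + 1) (n + 1) = laguerre α (n + 1) + laguerre (α + 1) n := by
  have pascal (i : ℕ) : Ring.choose (α + 1 + (n + 1 : ℕ)) (i + 1) =
      Ring.choose (α + (n + 1 : ℕ)) (i + 1) + Ring.choose (α + 1 + n) i := by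
    have top_succ : α + 1 + (n + 1 : ℕ) = (α + 1 + n) + 1 := by push_cast; ring
    have shift : α + (n + 1 : ℕ) = α + 1 + n := by push_cast; ring
    rw [top_succ, shift, Ring.choose_succ_succ, add_comm]
  simp only [laguerre, Nat.sum_antidiagonal_succ, pascal, Ring.choose_zero_right, mul_add, add_div,
    map_add, sum_add_distrib]
  exact (add_assoc _ _ _).symm

theorem derivative_laguerre_succ (α : K) (n : ℕ) :
    derivative (laguerre α (n + 1)) = -laguerre (α + 1) n := by
  have shift : α + (n + 1 : ℕ) = α + 1 + n := by push_cast; ring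
  simp only [laguerre, Nat.sum_antidiagonal_succ', shift, derivative_add, derivative_sum,
    derivative_monomial, Nat.cast_zero, mul_zero, monomial_zero_right, zero_add,
    Nat.add_sub_cancel, ← sum_neg_distrib, ← map_neg]
  refine sum_congr rfl fun p _ => congrArg _ ?_
  rw [Nat.factorial_succ]
  push_cast
  field_simp
  ring

theorem laguerre_sub_derivative (α : K) (n : ℕ) :
    laguerre α n - derivative (laguerre α n) = laguerre (α + 1) n := by
  cases n with
  | zero => simp [laguerre_zero]
  | succ n => rw [derivative_laguerre_succ, sub_neg_eq_add, laguerre_add_one_succ]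

theorem add_one_smul_laguerre_add_X_mul_derivative (α : K) (n : ℕ) :
    (α + 1) • laguerre (α + 1) n + X * derivative (laguerre (α + 1) n) =
      (n + α + 1) • laguerre α n := by
  have X_mul_derivative_monomial (j : ℕ) (c : K) :
      X * derivative (monomial j c) = monomial j (c * j) := by
    cases j <;> simp [X_mul_monomial]
  simp only [laguerre, derivative_sum, mul_sum, smul_sum, X_mul_derivative_monomial,
    smul_monomial, smul_eq_mul, ← sum_add_distrib, ← map_add]
  refine sum_congr rfl fun p hp => congrArg _ ?_
  have hn : (n : K) = p.1 + p.2 := by exact_mod_cast (mem_antidiagonal.mp hp).symm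
  have absorption := add_one_sub_mul_ringChoose (α + n) p.1
  rw [show α + n + 1 = α + 1 + n by ring] at absorption
  linear_combination (-1) ^ p.2 / (p.2.factorial : K) *
    (absorption - Ring.choose (α + 1 + n) p.1 * hn)

theorem succ_smul_laguerre_succ (α : K) (n : ℕ) :
    ((n : K) + 1) • laguerre α (n + 1) =
      (n + 1 + α) • laguerre α n - X * laguerre (α + 1) n := by
  have lower := add_one_smul_laguerre_add_X_mul_derivative (α - 1) (n + 1)
  have pascal := laguerre_add_one_succ (α - 1) n
  rw [sub_add_cancel] at lower pascal
  rw [derivative_laguerre_succ] at lower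
  simp only [smul_eq_C_mul, Nat.cast_add, Nat.cast_one, C_add, C_sub, C_1] at lower ⊢
  linear_combination (C (n : K) + 1 + C α) * pascal - lower

end Laguerre

theorem poch_succ (a : ℝ) (j : ℕ) : poch a (j + 1) = poch a j * (a + j) :=
  prod_range_succ _ _

theorem poch_ne_zero {a : ℝ} (ha : ∀ i : ℕ, a + i ≠ 0) (j : ℕ) : poch a j ≠ 0 :=
  prod_ne_zero_iff.mpr fun i _ => ha i

theorem poch_add_one_add (a : ℝ) (i j : ℕ) :
    poch (a + 1) (i + j) = poch (a + 1) j * (i.factorial * Ring.choose (a + (i + j : ℕ)) i) := by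
  induction i with
  | zero => simp
  | succ i ih =>
    have shift : a + (i + 1 + j : ℕ) = a + (i + j : ℕ) + 1 := by push_cast; ring
    rw [Nat.add_right_comm, poch_succ, ih, ← Nat.add_right_comm, shift, Nat.factorial_succ]
    push_cast
    linear_combination (-poch (a + 1) j * i.factorial) *
      succ_mul_ringChoose_succ (a + ((i : ℝ) + j)) i

theorem poch_add_one_add_div {a : ℝ} (ha : ∀ i : ℕ, a + 1 + i ≠ 0) (i j : ℕ) :
    poch (a + 1) (i + j) / (i.factorial * poch (a + 1) j) =
      Ring.choose (a + (i + j : ℕ)) i := by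
  rw [poch_add_one_add]
  field_simp [poch_ne_zero ha j, i.factorial_ne_zero]

section Ladder

open Polynomial

theorem Zc_eq_pow_mul_eval_laguerre {β : ℝ} (hβ : ∀ j : ℕ, β + 1 + j ≠ 0) {m n d : ℕ}
    (h : m = n + d) (z w : ℂ) :
    Zc β m n z w = z ^ d * (laguerre ((β : ℂ) + d) n).eval (z * w) := by
  simp only [Zc, laguerre, eval_finsetSum, eval_monomial, Nat.sum_antidiagonal_eq_sum_range_succ_mk,
    mul_sum]
  refine sum_congr rfl fun k hk => ?_
  obtain ⟨j, rfl⟩ := Nat.exists_eq_add_of_le (mem_range_succ_iff.mp hk)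
  have hj : k + j - k = j := Nat.add_sub_cancel_left k j
  have hjd : m - k = j + d := by lia
  have coefficient : poch (β + 1) m / (k.factorial * poch (β + 1) (j + d)) =
      Ring.choose (β + d + (k + j : ℕ)) k := by
    have shift : β + (k + (j + d) : ℕ) = β + d + (k + j : ℕ) := by push_cast; ring
    rw [h, add_assoc, poch_add_one_add_div hβ, shift]
  have coefficient_complex := congrArg Complex.ofRealHom coefficient
  simp only [Ring.map_choose, map_div₀, map_mul, map_add, map_natCast,
    Complex.ofRealHom_eq_coe] at coefficient_complex
  rw [hj, hjd, ← coefficient_complex]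
  push_cast
  field_simp
  ring

theorem deriv_Zc_fst {β : ℝ} (hβ : ∀ j : ℕ, β + 1 + j ≠ 0) {m n d : ℕ} (h : m = n + d)
    (z w : ℂ) :
    deriv (fun z' => Zc β m n z' w) z =
      d * z ^ (d - 1) * (laguerre ((β : ℂ) + d) n).eval (z * w) +
        z ^ d * ((derivative (laguerre ((β : ℂ) + d) n)).eval (z * w) * w) := by
  simp only [Zc_eq_pow_mul_eval_laguerre hβ h]
  exact ((hasDerivAt_pow d z).mul
    ((Polynomial.hasDerivAt _ _).comp z (hasDerivAt_mul_const w))).deriv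

theorem deriv_Zc_snd {β : ℝ} (hβ : ∀ j : ℕ, β + 1 + j ≠ 0) {m n d : ℕ} (h : m = n + d)
    (z w : ℂ) :
    deriv (fun w' => Zc β m n z w') w =
      z ^ (d + 1) * (derivative (laguerre ((β : ℂ) + d) n)).eval (z * w) := by
  simp only [Zc_eq_pow_mul_eval_laguerre hβ h]
  have chain := (Polynomial.hasDerivAt (laguerre ((β : ℂ) + d) n) (z * w)).comp w
    (hasDerivAt_const_mul z)
  refine (chain.const_mul (z ^ d)).deriv.trans ?_
  ring

theorem Zc_lower_fst {β : ℝ} (hβ : ∀ j : ℕ, β + 1 + j ≠ 0) {m n : ℕ} (h : n < m) {z : ℂ}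
    (hz : z ≠ 0) (w : ℂ) :
    (β : ℂ) / z * Zc β m n z w + deriv (fun z' => Zc β m n z' w) z =
      (m + β) * Zc β (m - 1) n z w := by
  obtain ⟨d, rfl⟩ := Nat.exists_eq_add_of_lt h
  have contiguity := congrArg (eval (z * w))
    (add_one_smul_laguerre_add_X_mul_derivative ((β : ℂ) + d) n)
  simp only [eval_add, eval_mul, eval_smul, eval_X, smul_eq_mul] at contiguity
  rw [deriv_Zc_fst hβ (add_assoc n d 1), Zc_eq_pow_mul_eval_laguerre hβ (add_assoc n d 1),
    Nat.add_sub_cancel, Nat.add_sub_cancel, Zc_eq_pow_mul_eval_laguerre hβ rfl]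
  push_cast
  rw [← add_assoc (β : ℂ)]
  field_simp
  linear_combination z ^ (d + 1) * contiguity

theorem Zc_raise_fst {β : ℝ} (hβ : ∀ j : ℕ, β + 1 + j ≠ 0) {m n : ℕ} (h : n ≤ m) (z w : ℂ) :
    z * Zc β m n z w - deriv (fun w' => Zc β m n z w') w = Zc β (m + 1) n z w := by
  obtain ⟨d, rfl⟩ := Nat.exists_eq_add_of_le h
  rw [deriv_Zc_snd hβ rfl, Zc_eq_pow_mul_eval_laguerre hβ rfl,
    Zc_eq_pow_mul_eval_laguerre hβ (add_assoc n d 1), Nat.cast_succ, ← add_assoc,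
    ← laguerre_sub_derivative, eval_sub]
  ring

theorem Zc_lower_snd {β : ℝ} (hβ : ∀ j : ℕ, β + 1 + j ≠ 0) {m n : ℕ} (h : n + 1 ≤ m) (z w : ℂ) :
    -deriv (fun w' => Zc β m (n + 1) z w') w = Zc β m n z w := by
  obtain ⟨d, hd⟩ := Nat.exists_eq_add_of_le h
  have hd' : m = n + (d + 1) := by lia
  rw [deriv_Zc_snd hβ hd, derivative_laguerre_succ, Zc_eq_pow_mul_eval_laguerre hβ hd',
    Nat.cast_succ, ← add_assoc, eval_neg, mul_neg, neg_neg]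

theorem succ_mul_Zc_succ_snd {β : ℝ} (hβ : ∀ j : ℕ, β + 1 + j ≠ 0) {m n : ℕ} (h : n < m)
    (z w : ℂ) :
    ((n : ℂ) + 1) * Zc β m (n + 1) z w =
      (m + β) * Zc β (m - 1) n z w - w * Zc β m n z w := by
  obtain ⟨d, rfl⟩ := Nat.exists_eq_add_of_lt h
  have contiguity := congrArg (eval (z * w)) (succ_smul_laguerre_succ ((β : ℂ) + d) n)
  simp only [eval_sub, eval_mul, eval_smul, eval_X, smul_eq_mul] at contiguity
  rw [Nat.add_sub_cancel, Zc_eq_pow_mul_eval_laguerre hβ (Nat.add_right_comm n d 1),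
    Zc_eq_pow_mul_eval_laguerre hβ rfl, Zc_eq_pow_mul_eval_laguerre hβ (add_assoc n d 1)]
  push_cast
  rw [← add_assoc (β : ℂ)]
  linear_combination z ^ d * contiguity

end Ladder

theorem ladder_case_n_gt_m_general (β : ℝ) (hβ : ∀ j : ℕ, β + 1 + j ≠ 0) (m n : ℕ) (hmn : m ≤ n) :
    (m < n → ∀ z w : ℂ, w ≠ 0 →
        ((β : ℂ) / w) * Zc β n m w z + deriv (fun w' => Zc β n m w' z) w
          = ((n + β : ℝ) : ℂ) * Zc β (n - 1) m w z) ∧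
    (∀ z w : ℂ,
        w * Zc β n m w z - deriv (fun z' => Zc β n m w z') z = Zc β (n + 1) m w z) ∧
    (1 ≤ m → ∀ z w : ℂ,
        -deriv (fun z' => Zc β n m w z') z = Zc β n (m - 1) w z) ∧
    (m < n → ∀ z w : ℂ, w ≠ 0 →
        ((β : ℂ) / w) * Zc β n m w z + deriv (fun w' => Zc β n m w' z) w
            - z * Zc β n m w z
          = ((m : ℂ) + 1) * Zc β n (m + 1) w z) := by
  refine ⟨fun hlt z w hw => ?_, fun z w => Zc_raise_fst hβ hmn w z, fun hm z w => ?_,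
    fun hlt z w hw => ?_⟩
  · rw [Zc_lower_fst hβ hlt hw]
    push_cast
    rfl
  · obtain ⟨m, rfl⟩ := Nat.exists_eq_add_of_le' hm
    exact Zc_lower_snd hβ hmn w z
  · rw [Zc_lower_fst hβ hlt hw, succ_mul_Zc_succ_snd hβ hlt]

/-- Ladder operators `𝒜₁, 𝒜₁†, 𝒜₂, 𝒜₂†` for the case `n > m`, acting on
`G(z,w) = Z^{(β)}_{n,m}(w,z)` (the 2D Laguerre polynomial with interchanged variables). -/
theorem ladder_case_n_gt_m (β : ℝ) (hβ : 0 ≤ β) (m n : ℕ) (hmn : m < n) :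
    (∀ z w : ℂ, w ≠ 0 →
        ((β : ℂ) / w) * Zc β n m w z + deriv (fun w' => Zc β n m w' z) w
          = ((n + β : ℝ) : ℂ) * Zc β (n - 1) m w z) ∧
    (∀ z w : ℂ,
        w * Zc β n m w z - deriv (fun z' => Zc β n m w z') z = Zc β (n + 1) m w z) ∧
    (1 ≤ m → ∀ z w : ℂ,
        -deriv (fun z' => Zc β n m w z') z = Zc β n (m - 1) w z) ∧
    (∀ z w : ℂ, w ≠ 0 →
        ((β : ℂ) / w) * Zc β n m w z + deriv (fun w' => Zc β n m w' z) w
            - z * Zc β n m w z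
          = ((m : ℂ) + 1) * Zc β n (m + 1) w z) := by
  have ⟨lower₁, raise₁, lower₂, raise₂⟩ :=
    ladder_case_n_gt_m_general β (fun j => by positivity) m n hmn.le
  exact ⟨lower₁ hmn, raise₁, lower₂, raise₂ hmn⟩
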